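/- Let ν be a real number with ν ≥ 1. For every integer k ≥ 1 one has j_{ν,k} < λ⁻_{ν−1,k+1} < j′_{ν,k+1} < λ⁺_{ν−1,k+1} < j_{ν,k+1}. -/

import Mathlib

/-- Bessel function of the first kind of real order `ν`, defined via its power series
`J_ν(z) = ∑ₘ (−1)^m / (m! Γ(ν+m+1)) (z/2)^(ν+2m)` (with real-exponent powers). -/
noncomputable def besselJ (ν z : ℝ) : ℝ :=
  ∑' m : ℕ, ((-1 : ℝ) ^ m / (Nat.factorial m * Real.Gamma (ν + m + 1))) *
    (z / 2) ^ (ν + 2 * (m : ℝ))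

/-- `x` (indexed by `k ≥ 1`) enumerates the positive zeroes of `f`: it is strictly
increasing on indices `k ≥ 1`, each `x k` is a positive zero of `f`, and every positive
zero of `f` is some `x k`. -/
def EnumPosZeros (f : ℝ → ℝ) (x : ℕ → ℝ) : Prop :=
  StrictMonoOn x (Set.Ici 1) ∧ (∀ k, 1 ≤ k → 0 < x k ∧ f (x k) = 0) ∧
    ∀ z : ℝ, 0 < z → f z = 0 → ∃ k, 1 ≤ k ∧ x k = z

/-!
Write `r = J_{ν-1} / J_ν`. Away from the zeros of `J_ν`, the zeros of `J_{ν-1} - J_ν`, `J_ν'` and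
`J_{ν-1} + J_ν` are the points where `r = 1`, `z r = ν` and `r = -1`.

The forms `T_c(z) = z² (J_{ν-1}² + J_ν²) - c z J_{ν-1} J_ν` vanish at `0+` and satisfy
`T_c' = z ((2ν - c) J_{ν-1}² + (c - 2ν + 2) J_ν²)`, so they are positive on `z > 0` whenever
`2ν - 2 ≤ c ≤ 2ν`. Since `r'` and `(z r)'` are negative multiples of `T_{2ν-1}` and `T_{2ν}`, both
`r` and `z r` decrease strictly between consecutive zeros of `J_ν`, counting `0` as the zeroth one;
`r` runs from `+∞` to `-∞`, and so does `z r`, except that it starts from `2ν > ν` at `0`. Hence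
each gap contains exactly one zero of each of the three functions, which identifies their indices.
Finally `T_{2ν} > 0` forces `ν < z` at a zero of `J_ν'`, where therefore `r = ν / z` lies strictly
between `-1` and `1`, and the monotonicity of `r` orders the three zeros.
-/

open Set Filter Topology

section RealAnalysis

variable {f f' g : ℝ → ℝ} {a b c d : ℝ}

lemma hasDerivAt_tsum_mul_pow {u : ℕ → ℝ}
    (hu : ∀ r : ℝ, Summable fun n : ℕ => (n + 1) * u (n + 1) * r ^ n) (x : ℝ) :
    HasDerivAt (fun y => ∑' n, u n * y ^ n) (∑' n : ℕ, (n + 1) * u (n + 1) * x ^ n) x := by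
  set R := |x| + 1
  have hbound : ∀ n : ℕ, ∀ y ∈ Metric.ball (0 : ℝ) R,
      ‖u n * (n * y ^ (n - 1))‖ ≤ |u n| * (n * R ^ (n - 1)) := by
    intro n y hy
    have hyR : |y| ≤ R := (mem_ball_zero_iff.1 hy).le
    rw [Real.norm_eq_abs, abs_mul, abs_mul, abs_pow, Nat.abs_cast]
    gcongr
  have hsum : Summable fun n : ℕ => |u n| * (n * R ^ (n - 1)) := by
    rw [← summable_nat_add_iff 1]
    refine (hu R).abs.congr fun n => ?_
    rw [abs_mul, abs_mul, abs_of_nonneg (by positivity : (0 : ℝ) ≤ n + 1),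
      abs_of_nonneg (by positivity : 0 ≤ R ^ n), Nat.add_sub_cancel]
    push_cast
    ring
  have hx : x ∈ Metric.ball (0 : ℝ) R := by simp [R]
  have hsum_zero : Summable fun n : ℕ => u n * (0 : ℝ) ^ n :=
    summable_of_ne_finset_zero (s := {0}) fun n hn => by simp_all
  refine (hasDerivAt_tsum_of_isPreconnected hsum Metric.isOpen_ball
    (convex_ball (0 : ℝ) R).isPreconnected (fun n y _ => (hasDerivAt_pow n y).const_mul (u n))
    hbound (Metric.mem_ball_self (by positivity)) hsum_zero hx).congr_deriv ?_
  rw [(Summable.of_norm_bounded hsum fun n => hbound n x hx).tsum_eq_zero_add]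
  simp only [Nat.cast_zero, zero_mul, mul_zero, zero_add, Nat.add_sub_cancel, Nat.cast_add,
    Nat.cast_one]
  exact tsum_congr fun n => by ring

lemma pos_of_tendsto_nhdsGT_zero_of_hasDerivAt (hf : ∀ z, 0 < z → HasDerivAt f (f' z) z)
    (hf' : ∀ z, 0 < z → 0 ≤ f' z) (hpos : ∀ᶠ z in 𝓝[>] 0, 0 < f' z)
    (hlim : Tendsto f (𝓝[>] 0) (𝓝 0)) {z : ℝ} (hz : 0 < z) : 0 < f z := by
  obtain ⟨ε, hε, hε_pos⟩ := mem_nhdsGT_iff_exists_Ioo_subset.1 hpos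
  have hmono : MonotoneOn f (Ioi 0) :=
    monotoneOn_of_hasDerivWithinAt_nonneg (convex_Ioi 0)
      (fun x hx => (hf x hx).continuousAt.continuousWithinAt)
      (fun x hx => (hf x (interior_subset hx)).hasDerivWithinAt)
      (fun x hx => hf' x (interior_subset hx))
  have hstrict : StrictMonoOn f (Ioo 0 ε) :=
    strictMonoOn_of_hasDerivWithinAt_pos (convex_Ioo 0 ε)
      (fun x hx => (hf x hx.1).continuousAt.continuousWithinAt)
      (fun x hx => (hf x (interior_subset hx).1).hasDerivWithinAt)
      (fun x hx => hε_pos (interior_subset hx))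
  have hnonneg : ∀ x, 0 < x → 0 ≤ f x := fun x hx =>
    le_of_tendsto hlim <| by
      filter_upwards [Ioo_mem_nhdsGT hx] with y hy using hmono hy.1 hx hy.2.le
  obtain ⟨y, hy0, hy⟩ := exists_between (lt_min hz hε)
  obtain ⟨hyz, hyε⟩ := lt_min_iff.1 hy
  calc 0 ≤ f (y / 2) := hnonneg _ (half_pos hy0)
    _ < f y := hstrict ⟨half_pos hy0, by linarith⟩ ⟨hy0, hyε⟩ (half_lt_self hy0)
    _ ≤ f z := hmono hy0 hz hyz.le

lemma existsUnique_mem_Ioo_eq_of_strictAntiOn (hab : a < b) (hcont : ContinuousOn f (Ioo a b))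
    (hanti : StrictAntiOn f (Ioo a b)) (hleft : ∀ᶠ z in 𝓝[>] a, c < f z)
    (hright : ∀ᶠ z in 𝓝[<] b, f z < c) : ∃! z, z ∈ Ioo a b ∧ f z = c := by
  obtain ⟨x, hxc, hx⟩ := (hleft.and (Ioo_mem_nhdsGT hab)).exists
  obtain ⟨y, hyc, hy⟩ := (hright.and (Ioo_mem_nhdsLT hab)).exists
  obtain ⟨z, hz, hzc⟩ := isPreconnected_Ioo.intermediate_value hy hx hcont ⟨hyc.le, hxc.le⟩
  exact ⟨z, ⟨hz, hzc⟩, fun w hw => hanti.injOn hw.1 hz (hw.2.trans hzc.symm)⟩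

lemma div_eq_div_slope_mul_inv_sub (hfa : f a = 0) {z : ℝ} (hz : z ≠ a) :
    g z / f z = g z / slope f a z * (z - a)⁻¹ := by
  have : z - a ≠ 0 := sub_ne_zero.2 hz
  rw [slope_def_field, hfa, sub_zero]
  field_simp

lemma tendsto_div_nhdsGT_atTop_of_hasDerivAt (hf : HasDerivAt f d a) (hfa : f a = 0)
    (hg : ContinuousAt g a) (hpos : 0 < g a / d) :
    Tendsto (fun z => g z / f z) (𝓝[>] a) atTop := by
  have hd : d ≠ 0 := by rintro rfl; simp at hpos
  have hquot : Tendsto (fun z => g z / slope f a z) (𝓝[>] a) (𝓝 (g a / d)) :=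
    (hg.mono_left nhdsWithin_le_nhds).div (hasDerivAt_iff_tendsto_slope_left_right.1 hf).2 hd
  have hsub : Tendsto (fun z => z - a) (𝓝[>] a) (𝓝[>] 0) := by
    rw [← sub_self a]
    exact (continuous_sub_right a).continuousWithinAt.tendsto_nhdsWithin
      fun z hz => sub_lt_sub_right (mem_Ioi.1 hz) a
  refine (hquot.pos_mul_atTop hpos (tendsto_inv_nhdsGT_zero.comp hsub)).congr' ?_
  filter_upwards [self_mem_nhdsWithin] with z hz
  exact (div_eq_div_slope_mul_inv_sub hfa (ne_of_gt hz)).symm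

lemma tendsto_div_nhdsLT_atBot_of_hasDerivAt (hf : HasDerivAt f d a) (hfa : f a = 0)
    (hg : ContinuousAt g a) (hpos : 0 < g a / d) :
    Tendsto (fun z => g z / f z) (𝓝[<] a) atBot := by
  have hd : d ≠ 0 := by rintro rfl; simp at hpos
  have hquot : Tendsto (fun z => g z / slope f a z) (𝓝[<] a) (𝓝 (g a / d)) :=
    (hg.mono_left nhdsWithin_le_nhds).div (hasDerivAt_iff_tendsto_slope_left_right.1 hf).1 hd
  have hsub : Tendsto (fun z => z - a) (𝓝[<] a) (𝓝[<] 0) := by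
    rw [← sub_self a]
    exact (continuous_sub_right a).continuousWithinAt.tendsto_nhdsWithin
      fun z hz => sub_lt_sub_right (mem_Iio.1 hz) a
  refine (hquot.pos_mul_atBot hpos (tendsto_inv_nhdsLT_zero.comp hsub)).congr' ?_
  filter_upwards [self_mem_nhdsWithin] with z hz
  exact (div_eq_div_slope_mul_inv_sub hfa (ne_of_lt hz)).symm

end RealAnalysis

section ZeroEnumeration

/-- `a < b` are zeros of `f` with no zero of `f` strictly between them. -/
structure ConsecutiveZeros (f : ℝ → ℝ) (a b : ℝ) : Prop where
  lt : a < b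
  left : f a = 0
  right : f b = 0
  ne_zero : ∀ z ∈ Ioo a b, f z ≠ 0

namespace EnumPosZeros

variable {f : ℝ → ℝ} {x a : ℕ → ℝ}

lemma strictMono_update_zero (hx : EnumPosZeros f x) : StrictMono (Function.update x 0 0) := by
  refine strictMono_nat_of_lt_succ fun n => ?_
  rcases n with _ | n
  · simpa using (hx.2.1 1 le_rfl).1
  · simpa using hx.1 (show 1 ≤ n + 1 by lia) (show 1 ≤ n + 1 + 1 by lia) (Nat.lt_succ_self _)

lemma update_zero_nonneg (hx : EnumPosZeros f x) (n : ℕ) :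
    0 ≤ Function.update x 0 0 n := by
  simpa using hx.strictMono_update_zero.monotone n.zero_le

lemma consecutiveZeros_update_zero (hx : EnumPosZeros f x) (hf : f 0 = 0) (n : ℕ) :
    ConsecutiveZeros f (Function.update x 0 0 n) (Function.update x 0 0 (n + 1)) := by
  have hmono := hx.strictMono_update_zero
  have hzero : ∀ m, f (Function.update x 0 0 m) = 0 := by
    rintro (_ | m)
    · simpa using hf
    · simpa using (hx.2.1 (m + 1) (by lia)).2
  refine ⟨hmono n.lt_succ_self, hzero n, hzero (n + 1), fun z hz hfz => ?_⟩
  have hz0 : 0 < z := (hx.update_zero_nonneg n).trans_lt hz.1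
  obtain ⟨k, hk, rfl⟩ := hx.2.2 z hz0 hfz
  have hxk : x k = Function.update x 0 0 k := (Function.update_of_ne (by lia) _ _).symm
  rw [hxk, mem_Ioo, hmono.lt_iff_lt, hmono.lt_iff_lt] at hz
  lia

lemma mem_Ioo_of_existsUnique (hx : EnumPosZeros f x) (ha : a 0 = 0)
    (hne : ∀ n, f (a (n + 1)) ≠ 0)
    (hex : ∀ n, ∃! z, z ∈ Ioo (a n) (a (n + 1)) ∧ f z = 0) (n : ℕ) :
    x (n + 1) ∈ Ioo (a n) (a (n + 1)) := by
  have hmono : StrictMono a := strictMono_nat_of_lt_succ fun m =>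
    let ⟨_, hz, _⟩ := hex m
    hz.1.1.trans hz.1.2
  have hupper : ∀ m, (∀ k, 1 ≤ k → k ≤ m → x k ≤ a m) → x (m + 1) < a (m + 1) := by
    intro m hprev
    obtain ⟨p, ⟨hp, hfp⟩, -⟩ := hex m
    have hp0 : 0 < p := ha.ge.trans_lt ((hmono.monotone m.zero_le).trans_lt hp.1)
    obtain ⟨k, hk, rfl⟩ := hx.2.2 p hp0 hfp
    have hmk : m + 1 ≤ k := by
      by_contra! hkm
      exact (hprev k hk (by lia)).not_gt hp.1
    exact (hx.1.monotoneOn (show 1 ≤ m + 1 by lia) hk hmk).trans_lt hp.2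
  induction n with
  | zero => exact ⟨ha ▸ (hx.2.1 1 le_rfl).1, hupper 0 fun k hk hk0 => by lia⟩
  | succ n ih =>
    have hn : 1 ≤ n + 1 := by lia
    have hlt : x (n + 1) < x (n + 1 + 1) :=
      hx.1 hn (show 1 ≤ n + 1 + 1 by lia) (Nat.lt_succ_self _)
    have hzero := fun m => (hx.2.1 (m + 1) (by lia)).2
    refine ⟨?_, hupper (n + 1) fun k hk hkn => (hx.1.monotoneOn hk hn hkn).trans ih.2.le⟩
    by_contra! hle
    have hlt' : x (n + 1 + 1) < a (n + 1) := hle.lt_of_ne fun h => hne n (h ▸ hzero (n + 1))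
    exact hlt.ne ((hex n).unique ⟨ih, hzero n⟩ ⟨⟨ih.1.trans hlt, hlt'⟩, hzero (n + 1)⟩)

end EnumPosZeros

end ZeroEnumeration

section BesselSeries

variable {ν z : ℝ}

/-- The coefficient of `x ^ m` in the entire function `besselEntire ν`. -/
noncomputable def besselCoeff (ν : ℝ) (m : ℕ) : ℝ :=
  (-1 : ℝ) ^ m / (Nat.factorial m * Real.Gamma (ν + m + 1))

/-- The entire part of `J_ν`, namely the function `E_ν` with `J_ν(z) = (z/2)^ν E_ν(z²/4)`; it is
the Bessel–Clifford function evaluated at `-x`. -/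
noncomputable def besselEntire (ν x : ℝ) : ℝ := ∑' m : ℕ, besselCoeff ν m * x ^ m

-- At the poles of `Gamma` the junk values `Gamma s = 0` and `0⁻¹ = 0` make this the correct
-- identity for the entire function `1 / Gamma`.
lemma inv_gamma_eq_self_mul_inv_gamma_add_one (s : ℝ) :
    (Real.Gamma s)⁻¹ = s * (Real.Gamma (s + 1))⁻¹ := by
  rcases eq_or_ne s 0 with rfl | hs
  · simp [Real.Gamma_zero]
  · rw [Real.Gamma_add_one hs, mul_inv, mul_inv_cancel_left₀ hs]

lemma add_one_mul_besselCoeff_succ (ν : ℝ) (n : ℕ) :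
    (n + 1) * besselCoeff ν (n + 1) = -besselCoeff (ν + 1) n := by
  have hshift : ν + ((n + 1 : ℕ) : ℝ) + 1 = ν + 1 + n + 1 := by push_cast; ring
  rw [besselCoeff, besselCoeff, hshift, Nat.factorial_succ, pow_succ]
  push_cast
  field_simp

lemma besselCoeff_eq_mul_besselCoeff_add_one (ν : ℝ) (n : ℕ) :
    besselCoeff ν n = (ν + 1 + n) * besselCoeff (ν + 1) n := by
  have hshift : ν + n + 1 = ν + 1 + n := by ring
  rw [besselCoeff, besselCoeff, hshift, div_eq_mul_inv, div_eq_mul_inv, mul_inv, mul_inv,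
    inv_gamma_eq_self_mul_inv_gamma_add_one (ν + 1 + n)]
  ring

lemma summable_besselCoeff_mul_pow (ν x : ℝ) : Summable fun m => besselCoeff ν m * x ^ m := by
  have hratio : ∀ n : ℕ, besselCoeff ν n * x ^ n * x =
      -((n + 1) * (ν + 1 + n)) * (besselCoeff ν (n + 1) * x ^ (n + 1)) := by
    intro n
    rw [besselCoeff_eq_mul_besselCoeff_add_one ν n]
    linear_combination (ν + 1 + n) * x ^ (n + 1) * add_one_mul_besselCoeff_succ ν n
  refine summable_of_ratio_norm_eventually_le (r := 1 / 2) (by norm_num) ?_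
  filter_upwards [eventually_ge_atTop ⌈2 * |x| - ν⌉₊] with n hn
  have hn' : 2 * |x| + 1 ≤ ν + 1 + n := by linarith [Nat.ceil_le.1 hn]
  have hK : 2 * |x| + 1 ≤ (n + 1) * (ν + 1 + n) :=
    hn'.trans (le_mul_of_one_le_left (by linarith [abs_nonneg x]) (by simp))
  have hK_nonneg : 0 ≤ (n + 1) * (ν + 1 + n) := hK.trans' (by positivity)
  have hnorm := congrArg norm (hratio n)
  rw [norm_mul _ x, norm_mul (-_), norm_neg, Real.norm_eq_abs x,
    Real.norm_of_nonneg hK_nonneg] at hnorm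
  refine le_of_mul_le_mul_left ?_ (by positivity : 0 < 2 * |x| + 1)
  calc (2 * |x| + 1) * ‖besselCoeff ν (n + 1) * x ^ (n + 1)‖
      ≤ ‖besselCoeff ν n * x ^ n‖ * |x| := by rw [hnorm]; gcongr
    _ ≤ (2 * |x| + 1) * (1 / 2 * ‖besselCoeff ν n * x ^ n‖) := by
      linarith [norm_nonneg (besselCoeff ν n * x ^ n)]

lemma hasDerivAt_besselEntire (ν x : ℝ) :
    HasDerivAt (besselEntire ν) (-besselEntire (ν + 1) x) x := by
  have hderiv := hasDerivAt_tsum_mul_pow (u := besselCoeff ν)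
  simp only [add_one_mul_besselCoeff_succ, neg_mul, tsum_neg] at hderiv
  exact hderiv (fun r => (summable_besselCoeff_mul_pow (ν + 1) r).neg) x

lemma continuous_besselEntire (ν : ℝ) : Continuous (besselEntire ν) :=
  continuous_iff_continuousAt.2 fun x => (hasDerivAt_besselEntire ν x).continuousAt

lemma besselEntire_zero (ν : ℝ) : besselEntire ν 0 = (Real.Gamma (ν + 1))⁻¹ := by
  rw [besselEntire, tsum_eq_single 0 fun m hm => by simp [hm]]
  simp [besselCoeff]

lemma besselEntire_eq_sub (ν x : ℝ) :
    besselEntire ν x = (ν + 1) * besselEntire (ν + 1) x - x * besselEntire (ν + 2) x := by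
  have hsucc : ∀ n : ℕ, besselCoeff ν (n + 1) =
      (ν + 1) * besselCoeff (ν + 1) (n + 1) - besselCoeff (ν + 2) n := by
    intro n
    have h := add_one_mul_besselCoeff_succ (ν + 1) n
    rw [show ν + 1 + 1 = ν + 2 by ring] at h
    rw [besselCoeff_eq_mul_besselCoeff_add_one]
    push_cast
    linear_combination h
  have hshift : Summable fun n : ℕ => besselCoeff (ν + 1) (n + 1) * x ^ (n + 1) :=
    (summable_nat_add_iff 1).2 (summable_besselCoeff_mul_pow (ν + 1) x)
  calc besselEntire ν x
      = besselCoeff ν 0 + ∑' n : ℕ, besselCoeff ν (n + 1) * x ^ (n + 1) := by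
        rw [besselEntire, (summable_besselCoeff_mul_pow ν x).tsum_eq_zero_add, pow_zero, mul_one]
    _ = (ν + 1) * besselCoeff (ν + 1) 0 +
          ∑' n : ℕ, ((ν + 1) * (besselCoeff (ν + 1) (n + 1) * x ^ (n + 1)) -
            x * (besselCoeff (ν + 2) n * x ^ n)) := by
        rw [besselCoeff_eq_mul_besselCoeff_add_one ν 0, Nat.cast_zero, add_zero]
        congr 2 with n
        rw [hsucc]
        ring
    _ = (ν + 1) * besselEntire (ν + 1) x - x * besselEntire (ν + 2) x := by
        rw [(hshift.mul_left _).tsum_sub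
          ((summable_besselCoeff_mul_pow (ν + 2) x).mul_left _), tsum_mul_left, tsum_mul_left,
          besselEntire, besselEntire, (summable_besselCoeff_mul_pow (ν + 1) x).tsum_eq_zero_add]
        ring

lemma besselJ_eq_rpow_mul_besselEntire (ν : ℝ) (hz : 0 < z) :
    besselJ ν z = (z / 2) ^ ν * besselEntire ν (z ^ 2 / 4) := by
  rw [besselJ, besselEntire, ← tsum_mul_left]
  refine tsum_congr fun m => ?_
  have hpow : (z / 2) ^ (ν + 2 * (m : ℝ)) = (z / 2) ^ ν * (z ^ 2 / 4) ^ m := by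
    rw [Real.rpow_add (by positivity), Real.rpow_mul (by positivity), Real.rpow_natCast,
      Real.rpow_two, div_pow]
    norm_num
  rw [hpow, besselCoeff]
  ring

lemma besselJ_zero_right (hν : 0 < ν) : besselJ ν 0 = 0 := by
  refine (tsum_congr fun m => ?_).trans tsum_zero
  rw [zero_div, Real.zero_rpow (by positivity), mul_zero]

lemma besselJ_add_besselJ_add_two (ν : ℝ) (hz : 0 < z) :
    besselJ ν z + besselJ (ν + 2) z = 2 * (ν + 1) / z * besselJ (ν + 1) z := by
  simp only [besselJ_eq_rpow_mul_besselEntire _ hz]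
  rw [besselEntire_eq_sub ν, Real.rpow_add_one (by positivity),
    Real.rpow_add (by positivity), Real.rpow_two]
  field_simp
  ring

lemma hasDerivAt_besselJ_sub_succ (ν : ℝ) (hz : 0 < z) :
    HasDerivAt (besselJ ν) (ν / z * besselJ ν z - besselJ (ν + 1) z) z := by
  have hpow : HasDerivAt (fun y : ℝ => (y / 2) ^ ν) (1 / 2 * ν * (z / 2) ^ (ν - 1)) z :=
    ((hasDerivAt_id z).div_const 2).rpow_const (Or.inl (by simpa using hz.ne'))
  have hentire : HasDerivAt (fun y : ℝ => besselEntire ν (y ^ 2 / 4))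
      (-besselEntire (ν + 1) (z ^ 2 / 4) * (((2 : ℕ) : ℝ) * z ^ (2 - 1) / 4)) z :=
    (hasDerivAt_besselEntire ν (z ^ 2 / 4)).comp (h := fun y => y ^ 2 / 4) z
      ((hasDerivAt_pow 2 z).div_const 4)
  have heq : besselJ ν =ᶠ[𝓝 z] fun y => (y / 2) ^ ν * besselEntire ν (y ^ 2 / 4) := by
    filter_upwards [lt_mem_nhds hz] with y hy using besselJ_eq_rpow_mul_besselEntire ν hy
  refine ((hpow.mul hentire).congr_of_eventuallyEq heq).congr_deriv ?_
  rw [besselJ_eq_rpow_mul_besselEntire _ hz, besselJ_eq_rpow_mul_besselEntire _ hz,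
    Real.rpow_sub_one (by positivity), Real.rpow_add_one (by positivity)]
  norm_num
  field_simp
  ring

lemma hasDerivAt_besselJ (ν : ℝ) (hz : 0 < z) :
    HasDerivAt (besselJ ν) (besselJ (ν - 1) z - ν / z * besselJ ν z) z := by
  refine (hasDerivAt_besselJ_sub_succ ν hz).congr_deriv ?_
  have hrec := besselJ_add_besselJ_add_two (ν - 1) hz
  rw [show ν - 1 + 2 = ν + 1 by ring, sub_add_cancel] at hrec
  linear_combination -hrec

lemma hasDerivAt_besselJ_sub_one (ν : ℝ) (hz : 0 < z) :
    HasDerivAt (besselJ (ν - 1)) ((ν - 1) / z * besselJ (ν - 1) z - besselJ ν z) z := by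
  simpa using hasDerivAt_besselJ_sub_succ (ν - 1) hz

end BesselSeries

section BoundaryBehaviour

variable {ν : ℝ}

lemma tendsto_rpow_mul_besselEntire_nhdsGT_zero {p : ℝ} (hp : 0 < p) (ν : ℝ) :
    Tendsto (fun z => (z / 2) ^ p * besselEntire ν (z ^ 2 / 4)) (𝓝[>] 0) (𝓝 0) := by
  have hentire := continuous_besselEntire ν
  have hcont : Continuous fun z : ℝ => (z / 2) ^ p * besselEntire ν (z ^ 2 / 4) :=
    ((Real.continuous_rpow_const hp.le).comp (continuous_id.div_const 2)).mul (by fun_prop)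
  simpa [Real.zero_rpow hp.ne'] using (hcont.tendsto 0).mono_left nhdsWithin_le_nhds

lemma tendsto_besselJ_nhdsGT_zero (hν : 0 < ν) : Tendsto (besselJ ν) (𝓝[>] 0) (𝓝 0) := by
  refine (tendsto_rpow_mul_besselEntire_nhdsGT_zero hν ν).congr' ?_
  filter_upwards [self_mem_nhdsWithin] with z hz
  exact (besselJ_eq_rpow_mul_besselEntire ν hz).symm

lemma tendsto_mul_besselJ_nhdsGT_zero (hν : -1 < ν) :
    Tendsto (fun z => z * besselJ ν z) (𝓝[>] 0) (𝓝 0) := by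
  have hlim := (tendsto_rpow_mul_besselEntire_nhdsGT_zero (neg_lt_iff_pos_add.1 hν) ν).const_mul 2
  rw [mul_zero] at hlim
  refine hlim.congr' ?_
  filter_upwards [self_mem_nhdsWithin] with z (hz : 0 < z)
  rw [besselJ_eq_rpow_mul_besselEntire ν hz, Real.rpow_add_one (by positivity)]
  ring

lemma eventually_besselJ_pos (hν : -1 < ν) : ∀ᶠ z in 𝓝[>] 0, 0 < besselJ ν z := by
  have hentire_zero : 0 < besselEntire ν (0 ^ 2 / 4) := by
    have hgamma := Real.Gamma_pos_of_pos (neg_lt_iff_pos_add.1 hν)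
    simpa [besselEntire_zero] using hgamma
  have hcont : Continuous fun z : ℝ => besselEntire ν (z ^ 2 / 4) :=
    (continuous_besselEntire ν).comp (by fun_prop)
  filter_upwards [self_mem_nhdsWithin,
    nhdsWithin_le_nhds (hcont.continuousAt.eventually_const_lt hentire_zero)] with z (hz : 0 < z) hE
  rw [besselJ_eq_rpow_mul_besselEntire ν hz]
  positivity

end BoundaryBehaviour

section BesselForm

variable {ν c z : ℝ}

/-- The quadratic form `z² (J_{ν-1}² + J_ν²) - c z J_{ν-1} J_ν`. For `c = 2ν` it is `z²` times the
Turánian `J_ν² - J_{ν-1} J_{ν+1}`, and for `c = 2ν - 1` it is `z²` times the Wronskian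
`J_{ν-1} J_ν' - J_{ν-1}' J_ν`. -/
noncomputable def besselForm (ν c z : ℝ) : ℝ :=
  z ^ 2 * (besselJ (ν - 1) z ^ 2 + besselJ ν z ^ 2) - c * z * besselJ (ν - 1) z * besselJ ν z

lemma hasDerivAt_besselForm (ν c : ℝ) (hz : 0 < z) :
    HasDerivAt (besselForm ν c)
      (z * ((2 * ν - c) * besselJ (ν - 1) z ^ 2 + (c - (2 * ν - 2)) * besselJ ν z ^ 2)) z := by
  have hI := hasDerivAt_besselJ_sub_one ν hz
  have hJ := hasDerivAt_besselJ ν hz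
  refine (((hasDerivAt_pow 2 z).mul ((hI.pow 2).add (hJ.pow 2))).sub
    ((((hasDerivAt_id z).const_mul c).mul hI).mul hJ)).congr_deriv ?_
  simp only [Pi.add_apply, Pi.mul_apply, Pi.pow_apply, id]
  field_simp
  ring

lemma tendsto_besselForm_nhdsGT_zero (hν : 0 < ν) (c : ℝ) :
    Tendsto (besselForm ν c) (𝓝[>] 0) (𝓝 0) := by
  have hzI := tendsto_mul_besselJ_nhdsGT_zero (show -1 < ν - 1 by linarith)
  have hzJ := tendsto_mul_besselJ_nhdsGT_zero (show -1 < ν by linarith)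
  have hJ := tendsto_besselJ_nhdsGT_zero hν
  have hlim := ((hzI.pow 2).add (hzJ.pow 2)).sub ((hzI.mul hJ).const_mul c)
  norm_num at hlim
  refine hlim.congr fun z => ?_
  rw [besselForm]
  ring

lemma besselForm_pos (hν : 0 < ν) (hc : c ∈ Icc (2 * ν - 2) (2 * ν)) (hz : 0 < z) :
    0 < besselForm ν c z := by
  have hc₁ := sub_nonneg.2 hc.1
  have hc₂ := sub_nonneg.2 hc.2
  refine pos_of_tendsto_nhdsGT_zero_of_hasDerivAt (fun z hz => hasDerivAt_besselForm ν c hz)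
    (fun z hz => by positivity) ?_ (tendsto_besselForm_nhdsGT_zero hν c) hz
  filter_upwards [self_mem_nhdsWithin, eventually_besselJ_pos (show -1 < ν by linarith),
    eventually_besselJ_pos (show -1 < ν - 1 by linarith)] with z (hz : 0 < z) hJ hI
  refine mul_pos hz ?_
  rcases hc₂.eq_or_lt with h | h
  · rw [← h, show c - (2 * ν - 2) = 2 by linarith]
    positivity
  · positivity

lemma besselJ_sub_one_ne_zero_of_besselJ_eq_zero (hν : 0 < ν) (hz : 0 < z)
    (hJ : besselJ ν z = 0) : besselJ (ν - 1) z ≠ 0 := by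
  intro hI
  have hpos := besselForm_pos hν (right_mem_Icc.2 (by linarith)) hz
  simp [besselForm, hI, hJ] at hpos

lemma deriv_besselJ (ν : ℝ) (hz : 0 < z) :
    deriv (besselJ ν) z = besselJ (ν - 1) z - ν / z * besselJ ν z :=
  (hasDerivAt_besselJ ν hz).deriv

lemma lt_of_deriv_besselJ_eq_zero (hν : 0 < ν) (hz : 0 < z) (hderiv : deriv (besselJ ν) z = 0) :
    ν < z := by
  have hpos := besselForm_pos hν (right_mem_Icc.2 (by linarith)) hz
  have hI : besselJ (ν - 1) z = ν / z * besselJ ν z := by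
    linarith [deriv_besselJ ν hz]
  have hform : besselForm ν (2 * ν) z = (z ^ 2 - ν ^ 2) * besselJ ν z ^ 2 := by
    rw [besselForm, hI]
    field_simp
    ring
  rw [hform] at hpos
  exact lt_of_pow_lt_pow_left₀ 2 hz.le (sub_pos.1 (pos_of_mul_pos_left hpos (sq_nonneg _)))

end BesselForm

section BesselRatio

variable {ν c z a b : ℝ}

/-- The quotient `J_{ν-1} / J_ν`, meaningful away from the zeros of `J_ν` (at a zero it takes the
junk value `0`). -/
noncomputable def besselRatio (ν z : ℝ) : ℝ := besselJ (ν - 1) z / besselJ ν z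

lemma hasDerivAt_besselRatio (hz : 0 < z) (hJ : besselJ ν z ≠ 0) :
    HasDerivAt (besselRatio ν) (-(besselForm ν (2 * ν - 1) z / (z ^ 2 * besselJ ν z ^ 2))) z := by
  refine ((hasDerivAt_besselJ_sub_one ν hz).div (hasDerivAt_besselJ ν hz) hJ).congr_deriv ?_
  rw [besselForm]
  field_simp
  ring

lemma hasDerivAt_mul_besselRatio (hz : 0 < z) (hJ : besselJ ν z ≠ 0) :
    HasDerivAt (fun y => y * besselRatio ν y)
      (-(besselForm ν (2 * ν) z / (z * besselJ ν z ^ 2))) z := by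
  refine ((hasDerivAt_id z).mul (hasDerivAt_besselRatio hz hJ)).congr_deriv ?_
  rw [id, besselForm, besselForm, besselRatio]
  field_simp
  ring

lemma strictAntiOn_besselRatio (hν : 0 < ν) {D : Set ℝ} (hD : Convex ℝ D)
    (hpos : ∀ z ∈ D, 0 < z) (hJ : ∀ z ∈ D, besselJ ν z ≠ 0) : StrictAntiOn (besselRatio ν) D := by
  have hderiv := fun z hz => hasDerivAt_besselRatio (hpos z hz) (hJ z hz)
  refine strictAntiOn_of_hasDerivWithinAt_neg hD
    (fun z hz => (hderiv z hz).continuousAt.continuousWithinAt)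
    (fun z hz => (hderiv z (interior_subset hz)).hasDerivWithinAt) fun z hz => ?_
  have hz₀ := hpos z (interior_subset hz)
  have hJ₀ := hJ z (interior_subset hz)
  have hform := besselForm_pos (c := 2 * ν - 1) hν ⟨by linarith, by linarith⟩ hz₀
  exact neg_neg_of_pos (by positivity)

lemma strictAntiOn_mul_besselRatio (hν : 0 < ν) {D : Set ℝ} (hD : Convex ℝ D)
    (hpos : ∀ z ∈ D, 0 < z) (hJ : ∀ z ∈ D, besselJ ν z ≠ 0) :
    StrictAntiOn (fun z => z * besselRatio ν z) D := by
  have hderiv := fun z hz => hasDerivAt_mul_besselRatio (hpos z hz) (hJ z hz)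
  refine strictAntiOn_of_hasDerivWithinAt_neg hD
    (fun z hz => (hderiv z hz).continuousAt.continuousWithinAt)
    (fun z hz => (hderiv z (interior_subset hz)).hasDerivWithinAt) fun z hz => ?_
  have hz₀ := hpos z (interior_subset hz)
  have hJ₀ := hJ z (interior_subset hz)
  have hform := besselForm_pos hν (right_mem_Icc.2 (by linarith)) hz₀
  exact neg_neg_of_pos (by positivity)

lemma besselJ_sub_one_div_sub_mul_pos (hν : 0 < ν) (ha : 0 < a) (hJ : besselJ ν a = 0) :
    0 < besselJ (ν - 1) a / (besselJ (ν - 1) a - ν / a * besselJ ν a) := by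
  rw [hJ, mul_zero, sub_zero, div_self (besselJ_sub_one_ne_zero_of_besselJ_eq_zero hν ha hJ)]
  exact one_pos

lemma tendsto_besselRatio_nhdsGT (hν : 0 < ν) (ha : 0 < a) (hJ : besselJ ν a = 0) :
    Tendsto (besselRatio ν) (𝓝[>] a) atTop :=
  tendsto_div_nhdsGT_atTop_of_hasDerivAt (hasDerivAt_besselJ ν ha) hJ
    (hasDerivAt_besselJ_sub_one ν ha).continuousAt (besselJ_sub_one_div_sub_mul_pos hν ha hJ)

lemma tendsto_besselRatio_nhdsLT (hν : 0 < ν) (ha : 0 < a) (hJ : besselJ ν a = 0) :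
    Tendsto (besselRatio ν) (𝓝[<] a) atBot :=
  tendsto_div_nhdsLT_atBot_of_hasDerivAt (hasDerivAt_besselJ ν ha) hJ
    (hasDerivAt_besselJ_sub_one ν ha).continuousAt (besselJ_sub_one_div_sub_mul_pos hν ha hJ)

lemma mul_besselRatio_eq_besselEntire_div (ν : ℝ) (hz : 0 < z) :
    z * besselRatio ν z =
      2 * besselEntire (ν - 1) (z ^ 2 / 4) / besselEntire ν (z ^ 2 / 4) := by
  rw [besselRatio, besselJ_eq_rpow_mul_besselEntire _ hz, besselJ_eq_rpow_mul_besselEntire _ hz,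
    Real.rpow_sub_one (by positivity)]
  field_simp

lemma tendsto_mul_besselRatio_nhdsGT_zero (hν : 0 < ν) :
    Tendsto (fun z => z * besselRatio ν z) (𝓝[>] 0) (𝓝 (2 * ν)) := by
  have hentire : ∀ μ : ℝ, Tendsto (fun z : ℝ => besselEntire μ (z ^ 2 / 4)) (𝓝[>] 0)
      (𝓝 (Real.Gamma (μ + 1))⁻¹) := fun μ => by
    have hcont : Continuous fun z : ℝ => besselEntire μ (z ^ 2 / 4) :=
      (continuous_besselEntire μ).comp (by fun_prop)
    simpa [besselEntire_zero] using (hcont.tendsto 0).mono_left nhdsWithin_le_nhds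
  have hgamma := (Real.Gamma_pos_of_pos hν).ne'
  have hlim := ((hentire (ν - 1)).const_mul 2).div (hentire ν)
    (inv_ne_zero (Real.Gamma_pos_of_pos (by linarith)).ne')
  have hvalue : 2 * (Real.Gamma (ν - 1 + 1))⁻¹ / (Real.Gamma (ν + 1))⁻¹ = 2 * ν := by
    rw [sub_add_cancel, Real.Gamma_add_one hν.ne']
    field_simp [hgamma]
  rw [hvalue] at hlim
  refine hlim.congr' ?_
  filter_upwards [self_mem_nhdsWithin] with z hz
  exact (mul_besselRatio_eq_besselEntire_div ν hz).symm

lemma tendsto_besselRatio_nhdsGT_zero (hν : 0 < ν) : Tendsto (besselRatio ν) (𝓝[>] 0) atTop := by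
  refine ((tendsto_mul_besselRatio_nhdsGT_zero hν).pos_mul_atTop (by positivity)
    tendsto_inv_nhdsGT_zero).congr' ?_
  filter_upwards [self_mem_nhdsWithin] with z (hz : 0 < z)
  field_simp

lemma existsUnique_besselRatio_eq (hν : 0 < ν) (ha : 0 ≤ a)
    (hab : ConsecutiveZeros (besselJ ν) a b) (c : ℝ) :
    ∃! z, z ∈ Ioo a b ∧ besselRatio ν z = c := by
  have hpos : ∀ z ∈ Ioo a b, 0 < z := fun z hz => ha.trans_lt hz.1
  have hleft : Tendsto (besselRatio ν) (𝓝[>] a) atTop := by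
    rcases ha.eq_or_lt with rfl | ha
    · exact tendsto_besselRatio_nhdsGT_zero hν
    · exact tendsto_besselRatio_nhdsGT hν ha hab.left
  have hright := tendsto_besselRatio_nhdsLT hν (ha.trans_lt hab.lt) hab.right
  exact existsUnique_mem_Ioo_eq_of_strictAntiOn hab.lt
    (fun z hz => (hasDerivAt_besselRatio (hpos z hz)
      (hab.ne_zero z hz)).continuousAt.continuousWithinAt)
    (strictAntiOn_besselRatio hν (convex_Ioo a b) hpos hab.ne_zero)
    (hleft.eventually_gt_atTop c) (hright.eventually_lt_atBot c)

lemma existsUnique_mul_besselRatio_eq (hν : 0 < ν) (ha : 0 ≤ a)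
    (hab : ConsecutiveZeros (besselJ ν) a b) (hc : c < 2 * ν) :
    ∃! z, z ∈ Ioo a b ∧ z * besselRatio ν z = c := by
  have hpos : ∀ z ∈ Ioo a b, 0 < z := fun z hz => ha.trans_lt hz.1
  have hid : ∀ (x : ℝ) (s : Set ℝ), Tendsto id (𝓝[s] x) (𝓝 x) := fun x s =>
    tendsto_id.mono_left nhdsWithin_le_nhds
  have hb := ha.trans_lt hab.lt
  have hleft : ∀ᶠ z in 𝓝[>] a, c < z * besselRatio ν z := by
    rcases ha.eq_or_lt with rfl | ha
    · exact (tendsto_mul_besselRatio_nhdsGT_zero hν).eventually_const_lt hc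
    · exact ((hid a _).pos_mul_atTop ha
        (tendsto_besselRatio_nhdsGT hν ha hab.left)).eventually_gt_atTop c
  have hright : Tendsto (fun z => z * besselRatio ν z) (𝓝[<] b) atBot :=
    (hid b _).pos_mul_atBot hb (tendsto_besselRatio_nhdsLT hν hb hab.right)
  exact existsUnique_mem_Ioo_eq_of_strictAntiOn hab.lt
    (fun z hz => (hasDerivAt_mul_besselRatio (hpos z hz)
      (hab.ne_zero z hz)).continuousAt.continuousWithinAt)
    (strictAntiOn_mul_besselRatio hν (convex_Ioo a b) hpos hab.ne_zero)
    hleft (hright.eventually_lt_atBot c)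

lemma besselRatio_eq_iff (hJ : besselJ ν z ≠ 0) :
    besselRatio ν z = c ↔ besselJ (ν - 1) z - c * besselJ ν z = 0 := by
  rw [besselRatio, div_eq_iff hJ, sub_eq_zero]

lemma mul_besselRatio_eq_iff (hz : 0 < z) (hJ : besselJ ν z ≠ 0) :
    z * besselRatio ν z = ν ↔ deriv (besselJ ν) z = 0 := by
  rw [deriv_besselJ ν hz, ← besselRatio_eq_iff hJ, eq_div_iff hz.ne', mul_comm]

lemma besselRatio_mem_Ioo_of_deriv_besselJ_eq_zero (hν : 0 < ν) (hz : 0 < z)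
    (hJ : besselJ ν z ≠ 0) (hderiv : deriv (besselJ ν) z = 0) : besselRatio ν z ∈ Ioo 0 1 := by
  have hratio : besselRatio ν z = ν / z := by
    rw [eq_div_iff hz.ne', mul_comm, mul_besselRatio_eq_iff hz hJ, hderiv]
  rw [hratio]
  exact ⟨by positivity, (div_lt_one hz).2 (lt_of_deriv_besselJ_eq_zero hν hz hderiv)⟩

end BesselRatio

section Interlacing

variable {ν : ℝ} {jn x : ℕ → ℝ}

namespace EnumPosZeros

lemma besselJ_sub_one_sub_mul_mem_Ioo (hν : 0 < ν) (hjn : EnumPosZeros (besselJ ν) jn) {c : ℝ}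
    (hx : EnumPosZeros (fun z => besselJ (ν - 1) z - c * besselJ ν z) x) (n : ℕ) :
    x (n + 1) ∈ Ioo (Function.update jn 0 0 n) (Function.update jn 0 0 (n + 1)) := by
  refine hx.mem_Ioo_of_existsUnique (Function.update_self ..) (fun n => ?_) (fun n => ?_) n
  · obtain ⟨hpos, hzero⟩ := hjn.2.1 (n + 1) n.succ_pos
    simpa [hzero] using besselJ_sub_one_ne_zero_of_besselJ_eq_zero hν hpos hzero
  · have hgap := hjn.consecutiveZeros_update_zero (besselJ_zero_right hν) n
    refine (existsUnique_congr fun z => and_congr_right fun hz => ?_).1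
      (existsUnique_besselRatio_eq hν (hjn.update_zero_nonneg n) hgap c)
    exact besselRatio_eq_iff (hgap.ne_zero z hz)

lemma deriv_besselJ_mem_Ioo (hν : 0 < ν) (hjn : EnumPosZeros (besselJ ν) jn)
    (hx : EnumPosZeros (deriv (besselJ ν)) x) (n : ℕ) :
    x (n + 1) ∈ Ioo (Function.update jn 0 0 n) (Function.update jn 0 0 (n + 1)) := by
  refine hx.mem_Ioo_of_existsUnique (Function.update_self ..) (fun n => ?_) (fun n => ?_) n
  · obtain ⟨hpos, hzero⟩ := hjn.2.1 (n + 1) n.succ_pos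
    simpa [deriv_besselJ ν hpos, hzero] using
      besselJ_sub_one_ne_zero_of_besselJ_eq_zero hν hpos hzero
  · have hgap := hjn.consecutiveZeros_update_zero (besselJ_zero_right hν) n
    have hnonneg := hjn.update_zero_nonneg n
    refine (existsUnique_congr fun z => and_congr_right fun hz => ?_).1
      (existsUnique_mul_besselRatio_eq hν hnonneg hgap (by linarith : ν < 2 * ν))
    exact mul_besselRatio_eq_iff (hnonneg.trans_lt hz.1) (hgap.ne_zero z hz)

end EnumPosZeros

theorem stmt16_general (ν : ℝ) (hν : 0 < ν) (k : ℕ) (hk : 1 ≤ k)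
    (jn jpn lam lamp : ℕ → ℝ)
    (hjn : EnumPosZeros (besselJ ν) jn)
    (hjpn : EnumPosZeros (deriv (besselJ ν)) jpn)
    (hlam : EnumPosZeros (fun z => besselJ (ν - 1) z - besselJ ν z) lam)
    (hlamp : EnumPosZeros (fun z => besselJ (ν - 1) z + besselJ ν z) lamp) :
    jn k < lam (k + 1) ∧ lam (k + 1) < jpn (k + 1) ∧
    jpn (k + 1) < lamp (k + 1) ∧ lamp (k + 1) < jn (k + 1) := by
  have hgap := hjn.consecutiveZeros_update_zero (besselJ_zero_right hν) k
  have hlam_mem := hjn.besselJ_sub_one_sub_mul_mem_Ioo hν (c := 1) (by simpa using hlam) k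
  have hjpn_mem := hjn.deriv_besselJ_mem_Ioo hν hjpn k
  have hlamp_mem := hjn.besselJ_sub_one_sub_mul_mem_Ioo hν (c := -1) (by simpa using hlamp) k
  rw [Function.update_of_ne (by lia), Function.update_of_ne (by lia)]
    at hgap hlam_mem hjpn_mem hlamp_mem
  have hlam_ratio : besselRatio ν (lam (k + 1)) = 1 :=
    (besselRatio_eq_iff (hgap.ne_zero _ hlam_mem)).2 (by simpa using (hlam.2.1 _ k.succ_pos).2)
  have hlamp_ratio : besselRatio ν (lamp (k + 1)) = -1 :=
    (besselRatio_eq_iff (hgap.ne_zero _ hlamp_mem)).2 (by simpa using (hlamp.2.1 _ k.succ_pos).2)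
  obtain ⟨hjpn_ratio_pos, hjpn_ratio_lt⟩ := besselRatio_mem_Ioo_of_deriv_besselJ_eq_zero hν
    (hjpn.2.1 _ k.succ_pos).1 (hgap.ne_zero _ hjpn_mem) (hjpn.2.1 _ k.succ_pos).2
  have hanti := strictAntiOn_besselRatio hν (convex_Ioo _ _)
    (fun z hz => (hjn.2.1 k hk).1.trans hz.1) hgap.ne_zero
  exact ⟨hlam_mem.1, (hanti.lt_iff_gt hjpn_mem hlam_mem).1 (by linarith),
    (hanti.lt_iff_gt hlamp_mem hjpn_mem).1 (by linarith), hlamp_mem.2⟩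

end Interlacing

/-- For `ν ≥ 1` and every `k ≥ 1`,
`j_{ν,k} < λ⁻_{ν−1,k+1} < j′_{ν,k+1} < λ⁺_{ν−1,k+1} < j_{ν,k+1}`. -/
theorem stmt16 (ν : ℝ) (hν : 1 ≤ ν) (k : ℕ) (hk : 1 ≤ k)
    (jn jpn lam lamp : ℕ → ℝ)
    (hjn : EnumPosZeros (besselJ ν) jn)
    (hjpn : EnumPosZeros (deriv (besselJ ν)) jpn)
    (hlam : EnumPosZeros (fun z => besselJ (ν - 1) z - besselJ ν z) lam)
    (hlamp : EnumPosZeros (fun z => besselJ (ν - 1) z + besselJ ν z) lamp) :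
    jn k < lam (k + 1) ∧ lam (k + 1) < jpn (k + 1) ∧
    jpn (k + 1) < lamp (k + 1) ∧ lamp (k + 1) < jn (k + 1) := by
  exact stmt16_general ν (by linarith) k hk jn jpn lam lamp hjn hjpn hlam hlamp
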